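/- Let p > 1, q > p, ξ > 0, and let W : [0,1] → ℝ be a C² function with -W'' = W^p on (0,1), W > 0 on (0,1), W(0) = 0, W'(1/2) = 0, W(1/2) = ξ, W' > 0 on [0,1/2), and (W')² = (2/(p+1))·(ξ^{p+1} − W^{p+1}) on [0,1/2]. Define L_{p,d} := ∫₀¹ s^d/sqrt(1−s^{p+1}) ds. Then ∫₀^{1/2} x²·W(x)^q dx = (p+1)/(2q-p+1) · [ (1/(q-p+1))·( ξ^{q-p+1} − sqrt(2(p+1))·ξ^{(2q-3p+3)/2}·L_{p,q-p+1} ) + (2(q-p)/(p+1))·ξ^{p+1}·∫₀^{1/2} x²·W(x)^{q-p-1} dx ]. -/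

import Mathlib

/-!
Write `r = q - p + 1`. By the equation and the energy identity,
`(W ^ r)'' = -(r (2q - p + 1) / (p + 1)) W ^ q + (2 r (q - p) / (p + 1)) ξ ^ (p + 1) W ^ (q - p - 1)`
(`rpow_second_deriv`). Integrating by parts twice amounts to applying the fundamental theorem of
calculus to `F = x ^ 2 r W ^ (r - 1) W' - 2 x W ^ r`, for which `F' = x ^ 2 (W ^ r)'' - 2 W ^ r`,
`F 0 = 0` and `F (1/2) = -ξ ^ r`. The term `x ^ 2 W ^ (q - p - 1)` may be singular at `0`; adding
to `F` a primitive of the continuous terms leaves a function with nonnegative derivative, and such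
a derivative is automatically integrable (`moment_identity`). Finally the substitution
`s = W x / ξ`, in which the energy identity gives `W'`, turns the integral of `W ^ r` into the
integral in `s` of the statement (`integral_rpow_eq`).
-/

open Set MeasureTheory

/-- The energy identity and the sign of the derivative determine the derivative. -/
lemma deriv_eq_sqrt {p ξ : ℝ} {W : ℝ → ℝ}
    (hd : deriv W (1/2) = 0) (hd' : ∀ x ∈ Ico (0:ℝ) (1/2), 0 < deriv W x)
    (henergy : ∀ x ∈ Icc (0:ℝ) (1/2),
      (deriv W x) ^ 2 = (2/(p+1)) * (ξ ^ (p+1) - W x ^ (p+1)))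
    {x : ℝ} (hx : x ∈ Icc (0:ℝ) (1/2)) :
    deriv W x = Real.sqrt ((2/(p+1)) * (ξ ^ (p+1) - W x ^ (p+1))) := by
  rw [← henergy x hx, Real.sqrt_sq]
  rcases hx.2.lt_or_eq with h | h
  · exact (hd' x ⟨hx.1, h⟩).le
  · rw [h, hd]

lemma image_div_Ioo {ξ : ℝ} (hξ : 0 < ξ) {W : ℝ → ℝ}
    (hc : ContinuousOn W (Icc 0 (1/2))) (hm : StrictMonoOn W (Icc 0 (1/2)))
    (h0 : W 0 = 0) (hxi : W (1/2) = ξ) :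
    (fun x => W x / ξ) '' Ioo 0 (1/2) = Ioo 0 1 := by
  apply Subset.antisymm
  · rintro _ ⟨x, hx, rfl⟩
    have h1 := hm (left_mem_Icc.2 (by norm_num)) (Ioo_subset_Icc_self hx) hx.1
    have h2 := hm (Ioo_subset_Icc_self hx) (right_mem_Icc.2 (by norm_num)) hx.2
    rw [h0] at h1
    rw [hxi] at h2
    exact ⟨div_pos h1 hξ, (div_lt_one hξ).2 h2⟩
  · have := intermediate_value_Ioo (by norm_num : (0:ℝ) ≤ 1/2) (hc.div_const ξ)
    simpa [h0, show W (2⁻¹) = ξ by rw [← hxi]; norm_num, hξ.ne'] using this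

/-- The substitution `s = W x / ξ`. -/
lemma integral_rpow_eq {p r ξ : ℝ} (hp : 1 < p) (hξ : 0 < ξ) {W : ℝ → ℝ}
    (hc : ContinuousOn W (Icc 0 (1/2)))
    (hpos : ∀ x ∈ Ioo (0:ℝ) (1/2), 0 < W x)
    (h0 : W 0 = 0) (hd : deriv W (1/2) = 0) (hxi : W (1/2) = ξ)
    (hd' : ∀ x ∈ Ico (0:ℝ) (1/2), 0 < deriv W x)
    (henergy : ∀ x ∈ Icc (0:ℝ) (1/2),
      (deriv W x) ^ 2 = (2/(p+1)) * (ξ ^ (p+1) - W x ^ (p+1))) :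
    2 * ∫ x in (0:ℝ)..(1/2), W x ^ r
      = Real.sqrt (2*(p+1)) * ξ ^ (r + 1 - (p+1)/2)
          * ∫ s in (0:ℝ)..1, s ^ r / Real.sqrt (1 - s ^ (p+1)) := by
  have hm : StrictMonoOn W (Icc 0 (1/2)) := by
    apply strictMonoOn_of_deriv_pos (convex_Icc _ _) hc
    intro x hx
    rw [interior_Icc] at hx
    exact hd' x (Ioo_subset_Ico_self hx)
  have hinj : InjOn (fun x => W x / ξ) (Ioo 0 (1/2)) := by
    intro x hx y hy hxy
    exact hm.injOn (Ioo_subset_Icc_self hx) (Ioo_subset_Icc_self hy)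
      ((div_left_inj' hξ.ne').1 hxy)
  have hder : ∀ x ∈ Ioo (0:ℝ) (1/2), HasDerivWithinAt (fun x => W x / ξ) (deriv W x / ξ)
      (Ioo 0 (1/2)) x := fun x hx =>
    ((differentiableAt_of_deriv_ne_zero
      (hd' x (Ioo_subset_Ico_self hx)).ne').hasDerivAt.div_const ξ).hasDerivWithinAt
  have key := integral_image_eq_integral_abs_deriv_smul measurableSet_Ioo hder hinj
    (fun s => s ^ r / Real.sqrt (1 - s ^ (p+1)))
  rw [image_div_Ioo hξ hc hm h0 hxi] at key
  rw [intervalIntegral.integral_of_le (by norm_num), intervalIntegral.integral_of_le (by norm_num),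
    integral_Ioc_eq_integral_Ioo, integral_Ioc_eq_integral_Ioo, key, ← integral_const_mul,
    ← integral_const_mul]
  apply setIntegral_congr_fun measurableSet_Ioo
  intro x hx
  have hW := hpos x hx
  have hWξ : W x < ξ := by
    rw [← hxi]; exact hm (Ioo_subset_Icc_self hx) (right_mem_Icc.2 (by norm_num)) hx.2
  have hdx := hd' x (Ioo_subset_Ico_self hx)
  have hp1 : 0 < p + 1 := by linarith
  have hu : 0 < 1 - (W x / ξ) ^ (p+1) := by
    have := Real.rpow_lt_one (div_nonneg hW.le hξ.le) ((div_lt_one hξ).2 hWξ) hp1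
    linarith
  have hds : deriv W x
      = Real.sqrt (2/(p+1)) * (ξ ^ ((p+1)/2) * Real.sqrt (1 - (W x / ξ) ^ (p+1))) := by
    rw [deriv_eq_sqrt hd hd' henergy (Ioo_subset_Icc_self hx), Real.sqrt_mul (by positivity)]
    congr 1
    have h1 : ξ ^ (p+1) - W x ^ (p+1) = ξ ^ (p+1) * (1 - (W x / ξ) ^ (p+1)) := by
      rw [Real.div_rpow hW.le hξ.le]
      have := (Real.rpow_pos_of_pos hξ (p+1)).ne'
      field_simp
    rw [h1, Real.sqrt_mul (by positivity), Real.sqrt_eq_rpow (ξ ^ (p+1)), ← Real.rpow_mul hξ.le]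
    congr 2
    ring
  have hs : Real.sqrt (2*(p+1)) * Real.sqrt (2/(p+1)) = 2 := by
    rw [← Real.sqrt_mul (by positivity), show 2*(p+1) * (2/(p+1)) = 2 ^ 2 by field_simp,
      Real.sqrt_sq (by norm_num)]
  have hsq := (Real.sqrt_pos.2 hu).ne'
  simp only [smul_eq_mul]
  rw [abs_of_pos (div_pos hdx hξ), hds, Real.div_rpow hW.le hξ.le r,
    Real.rpow_sub hξ, Real.rpow_add hξ, Real.rpow_one]
  have hξr := (Real.rpow_pos_of_pos hξ r).ne'
  have hξp := (Real.rpow_pos_of_pos hξ ((p+1)/2)).ne'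
  field_simp
  linear_combination (-1 : ℝ) * hs

/-- The second derivative of `W ^ r`, written as the derivative of `r W ^ (r - 1) W'`, with
`r = q - p + 1`. -/
lemma rpow_second_deriv {p q ξ : ℝ} (hp : 1 < p) {W : ℝ → ℝ} {x : ℝ}
    (hW : 0 < W x) (hWd : HasDerivAt W (deriv W x) x)
    (hWdd : HasDerivAt (deriv W) (-(W x ^ p)) x)
    (he : (deriv W x) ^ 2 = (2/(p+1)) * (ξ ^ (p+1) - W x ^ (p+1))) :
    HasDerivAt (fun y => (q - p + 1) * (W y ^ (q - p) * deriv W y))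
      ((q - p + 1) * ((2*(q - p)/(p+1)) * ξ ^ (p+1) * W x ^ (q - p - 1)
        - (2*q - p + 1)/(p+1) * W x ^ q)) x := by
  have hp1 : p + 1 ≠ 0 := by linarith
  refine (((hWd.rpow_const (p := q - p) (Or.inl hW.ne')).mul hWdd).const_mul
    (q - p + 1)).congr_deriv ?_
  have e1 : W x ^ q = W x ^ (q - p - 1) * W x ^ (p + 1) := by
    rw [← Real.rpow_add hW]; congr 1; ring
  have e2 : W x ^ (q - p) * W x ^ p = W x ^ (q - p - 1) * W x ^ (p + 1) := by
    rw [← Real.rpow_add hW, ← Real.rpow_add hW]; congr 1; ring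
  rw [e1]
  have e3 : deriv W x * (q - p) * W x ^ (q - p - 1) * deriv W x
      = (q - p) * W x ^ (q - p - 1) * ((2/(p+1)) * (ξ ^ (p+1) - W x ^ (p+1))) := by
    rw [← he]; ring
  rw [e3, mul_neg, e2]
  field_simp
  ring

/-- The result of integrating `x ^ 2 (W ^ r)''` by parts twice, with `r = q - p + 1`. -/
lemma moment_identity {p q ξ : ℝ} (hp : 1 < p) (hq : p < q) (hξ : 0 < ξ) {W : ℝ → ℝ}
    (hc : ContinuousOn W (Icc 0 (1/2)))
    (hode : ∀ x ∈ Ioo (0:ℝ) (1/2), -(deriv (deriv W) x) = W x ^ p)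
    (hpos : ∀ x ∈ Ioo (0:ℝ) (1/2), 0 < W x)
    (hd : deriv W (1/2) = 0) (hxi : W (1/2) = ξ)
    (hd' : ∀ x ∈ Ico (0:ℝ) (1/2), 0 < deriv W x)
    (henergy : ∀ x ∈ Icc (0:ℝ) (1/2),
      (deriv W x) ^ 2 = (2/(p+1)) * (ξ ^ (p+1) - W x ^ (p+1))) :
    (q - p + 1) * ((2*(q - p)/(p+1)) * ξ ^ (p+1))
        * (∫ x in (0:ℝ)..(1/2), x ^ 2 * W x ^ (q - p - 1))
      = -ξ ^ (q - p + 1)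
        + (q - p + 1) * ((2*q - p + 1)/(p+1)) * (∫ x in (0:ℝ)..(1/2), x ^ 2 * W x ^ q)
        + 2 * ∫ x in (0:ℝ)..(1/2), W x ^ (q - p + 1) := by
  have hhalf : (0:ℝ) ≤ 1/2 := by norm_num
  have hcr : ∀ a : ℝ, 0 ≤ a → ContinuousOn (fun x => W x ^ a) (Icc 0 (1/2)) :=
    fun a ha => hc.rpow_const fun _ _ => Or.inr ha
  have hcd : ContinuousOn (deriv W) (Icc 0 (1/2)) := by
    have : ContinuousOn (fun x => Real.sqrt ((2/(p+1)) * (ξ ^ (p+1) - W x ^ (p+1))))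
        (Icc 0 (1/2)) :=
      ((continuousOn_const.sub (hcr (p+1) (by linarith))).const_mul _).sqrt
    exact this.congr fun x hx => deriv_eq_sqrt hd hd' henergy hx
  set k1 : ℝ → ℝ := fun x => x ^ 2 * W x ^ q with hk1
  set k2 : ℝ → ℝ := fun x => W x ^ (q - p + 1) with hk2
  have hk1c : ContinuousOn k1 (Icc 0 (1/2)) :=
    (continuousOn_id.pow 2).mul (hcr q (by linarith))
  have hk2c : ContinuousOn k2 (Icc 0 (1/2)) := hcr _ (by linarith)
  set c : ℝ := (q - p + 1) * ((2*q - p + 1)/(p+1)) with hcdef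
  set k : ℝ → ℝ := fun x => c * k1 x + 2 * k2 x with hk
  have hkc : ContinuousOn k (Icc 0 (1/2)) := (hk1c.const_mul c).add (hk2c.const_mul 2)
  have hki : IntervalIntegrable k volume 0 (1/2) := hkc.intervalIntegrable_of_Icc hhalf
  set F : ℝ → ℝ := fun x =>
    x ^ 2 * ((q - p + 1) * (W x ^ (q - p) * deriv W x)) - 2 * (x * W x ^ (q - p + 1))
      + ∫ t in (0:ℝ)..x, k t with hF
  set g : ℝ → ℝ := fun x =>
    (q - p + 1) * ((2*(q - p)/(p+1)) * ξ ^ (p+1)) * (x ^ 2 * W x ^ (q - p - 1)) with hg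
  have hFc : ContinuousOn F (Icc 0 (1/2)) := by
    refine (((continuousOn_id.pow 2).mul
      (((hcr (q-p) (by linarith)).mul hcd).const_mul _)).sub
      ((continuousOn_id.mul hk2c).const_mul 2)).add ?_
    have := intervalIntegral.continuousOn_primitive_interval' hki (left_mem_uIcc)
    rwa [uIcc_of_le hhalf] at this
  have hFd : ∀ x ∈ Ioo (0:ℝ) (1/2), HasDerivAt F (g x) x := by
    intro x hx
    have hW := hpos x hx
    have hWd := (differentiableAt_of_deriv_ne_zero
      (hd' x (Ioo_subset_Ico_self hx)).ne').hasDerivAt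
    have hdd : deriv (deriv W) x = -(W x ^ p) := by rw [← hode x hx, neg_neg]
    have hWdd : HasDerivAt (deriv W) (-(W x ^ p)) x := by
      rw [← hdd]
      apply DifferentiableAt.hasDerivAt
      -- A nonzero value of `deriv` is not a junk value, so the equation itself gives differentiability.
      apply differentiableAt_of_deriv_ne_zero
      rw [hdd]
      exact neg_ne_zero.2 (Real.rpow_pos_of_pos hW p).ne'
    have h2 := rpow_second_deriv (q := q) hp hW hWd hWdd (henergy x (Ioo_subset_Icc_self hx))
    have h3 := hWd.rpow_const (p := q - p + 1) (Or.inl hW.ne')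
    have hK : HasDerivAt (fun y => ∫ t in (0:ℝ)..y, k t) (k x) x := by
      have hko : ContinuousOn k (Ioo 0 (1/2)) := hkc.mono Ioo_subset_Icc_self
      apply intervalIntegral.integral_hasDerivAt_right
      · exact (hkc.mono (Icc_subset_Icc_right hx.2.le)).intervalIntegrable_of_Icc hx.1.le
      · exact hko.stronglyMeasurableAtFilter isOpen_Ioo x hx
      · exact hko.continuousAt (isOpen_Ioo.mem_nhds hx)
    refine ((((hasDerivAt_pow 2 x).mul h2).sub
      (((hasDerivAt_id x).mul h3).const_mul 2)).add hK).congr_deriv ?_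
    simp only [hg, hk, hk1, hk2, hcdef, id, add_sub_cancel_right]
    push_cast
    ring
  have hgn : ∀ x ∈ Ioo (0:ℝ) (1/2), 0 ≤ g x := by
    intro x hx
    have hW := hpos x hx
    have h1 : 0 < q - p := by linarith
    have h2 : 0 < p + 1 := by linarith
    simp only [hg]
    positivity
  have hgi : IntervalIntegrable g volume 0 (1/2) := by
    rw [intervalIntegrable_iff_integrableOn_Ioc_of_le hhalf]
    exact intervalIntegral.integrableOn_deriv_of_nonneg hFc hFd hgn
  have hmain := intervalIntegral.integral_eq_sub_of_hasDerivAt_of_le hhalf hFc hFd hgi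
  have hF0 : F 0 = 0 := by simp [hF]
  have hF1 : F (1/2) = -ξ ^ (q - p + 1) + ∫ t in (0:ℝ)..(1/2), k t := by
    simp only [hF]
    rw [hd, hxi]
    ring
  have hkint : ∫ t in (0:ℝ)..(1/2), k t
      = c * (∫ t in (0:ℝ)..(1/2), k1 t) + 2 * ∫ t in (0:ℝ)..(1/2), k2 t := by
    rw [intervalIntegral.integral_add
      ((hk1c.intervalIntegrable_of_Icc hhalf).const_mul c)
      ((hk2c.intervalIntegrable_of_Icc hhalf).const_mul 2),
      intervalIntegral.integral_const_mul, intervalIntegral.integral_const_mul]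
  rw [hF0, hF1, hkint, intervalIntegral.integral_const_mul] at hmain
  rw [hmain]
  ring


theorem stmt13 (p q ξ : ℝ) (hp : 1 < p) (hq : p < q) (hξ : 0 < ξ) (W : ℝ → ℝ)
    (hW : ContDiffOn ℝ 2 W (Set.Icc 0 1))
    (hode : ∀ x ∈ Set.Ioo (0:ℝ) 1, -(deriv (deriv W) x) = W x ^ p)
    (hpos : ∀ x ∈ Set.Ioo (0:ℝ) 1, 0 < W x)
    (h0 : W 0 = 0) (hd : deriv W (1/2) = 0) (hxi : W (1/2) = ξ)
    (hd' : ∀ x ∈ Set.Ico (0:ℝ) (1/2), 0 < deriv W x)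
    (henergy : ∀ x ∈ Set.Icc (0:ℝ) (1/2),
      (deriv W x) ^ 2 = (2/(p+1)) * (ξ ^ (p+1) - W x ^ (p+1))) :
    ∫ x in (0:ℝ)..(1/2), x ^ 2 * W x ^ q
      = (p+1)/(2*q - p + 1)
        * ((1/(q - p + 1))
            * (ξ ^ (q - p + 1)
              - Real.sqrt (2*(p+1)) * ξ ^ ((2*q - 3*p + 3)/2)
                * ∫ s in (0:ℝ)..1, s ^ (q - p + 1) / Real.sqrt (1 - s ^ (p+1)))
          + (2*(q - p)/(p+1)) * ξ ^ (p+1)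
            * ∫ x in (0:ℝ)..(1/2), x ^ 2 * W x ^ (q - p - 1)) := by
  have hc : ContinuousOn W (Icc 0 (1/2)) :=
    hW.continuousOn.mono (Icc_subset_Icc_right (by norm_num))
  have hsub : Ioo (0:ℝ) (1/2) ⊆ Ioo 0 1 := Ioo_subset_Ioo_right (by norm_num)
  have hmom := moment_identity hp hq hξ hc (fun x hx => hode x (hsub hx))
    (fun x hx => hpos x (hsub hx)) hd hxi hd' henergy
  have hL := integral_rpow_eq (r := q - p + 1) hp hξ hc (fun x hx => hpos x (hsub hx))
    h0 hd hxi hd' henergy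
  rw [show q - p + 1 + 1 - (p+1)/2 = (2*q - 3*p + 3)/2 by ring] at hL
  rw [← hL]
  have h1 : p + 1 ≠ 0 := by linarith
  have h2 : q - p + 1 ≠ 0 := by linarith
  have h3 : 2*q - p + 1 ≠ 0 := by linarith
  -- `field_simp` reorders the product `2*q`, so the denominator is needed in this form as well.
  have h4 : q*2 - p + 1 ≠ 0 := by linarith
  field_simp at hmom ⊢
  linear_combination -hmom
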